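/- Identify 2^ℕ × 2^ℕ with 2^ℕ via the join map (A, B) ↦ A ⊕ B, where (A⊕B)(2n) = A(n) and (A⊕B)(2n+1) = B(n). If μ and ν are C-trivial Borel probability measures on 2^ℕ, then the pushforward of the product measure μ × ν under the join map is a C-trivial measure. -/

import Mathlib

open MeasureTheory Filter

/-- Cantor space: the space of infinite binary sequences. -/
abbrev Cantor : Type := ℕ → Bool

/-- Finite binary strings. -/
abbrev BStr : Type := List Bool

/-- The cylinder set of sequences extending the string `x`. -/
def cyl (x : BStr) : Set Cantor := {Z | ∀ i : Fin x.length, Z i.1 = x.get i}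

/-- The string of the first `n` bits of `Z`. -/
def seg (Z : Cantor) (n : ℕ) : BStr := List.ofFn fun i : Fin n => Z i.1

/-- `lam` is the uniform (fair-coin product) measure: every cylinder `[x]`
has measure `2^{-|x|}`. -/
def IsUniform (lam : Measure Cantor) : Prop :=
  ∀ x : BStr, lam (cyl x) = (2 : ENNReal)⁻¹ ^ x.length

/-- `(G_m)` is a Martin-Löf test with respect to the measure `ρ`:
the sets `G_m` are uniformly effectively open and `ρ (G_m) ≤ 2^{-m}`. -/
def IsMLTest (ρ : Measure Cantor) (G : ℕ → Set Cantor) : Prop :=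
  (∃ σ : ℕ → ℕ → BStr, Computable₂ σ ∧ ∀ m, G m = ⋃ i, cyl (σ m i)) ∧
  ∀ m, ρ (G m) ≤ (2 : ENNReal)⁻¹ ^ m

/-- `μ` is Martin-Löf absolutely continuous in `ρ`: `inf_m μ(G_m) = 0`
for every `ρ`-Martin-Löf test `(G_m)`. -/
def MLAC (μ ρ : Measure Cantor) : Prop :=
  ∀ G : ℕ → Set Cantor, IsMLTest ρ G → ⨅ m, μ (G m) = 0

/-- `Z` is Martin-Löf random with respect to `lam`. -/
def MLRandom (lam : Measure Cantor) (Z : Cantor) : Prop :=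
  ∀ G : ℕ → Set Cantor, IsMLTest lam G → Z ∉ ⋂ m, G m

/-- `ρ` is a computable measure: `ρ [x]` is a computable real, uniformly in `x`. -/
def ComputableMeasure (ρ : Measure Cantor) : Prop :=
  ∃ q : BStr → ℕ → ℚ, Computable₂ q ∧
    ∀ x k, |(q x k : ℝ) - (ρ (cyl x)).toReal| ≤ (2 : ℝ)⁻¹ ^ k

/-- `U` is a universal plain machine. -/
def UniversalPlain (U : BStr →. BStr) : Prop :=
  Partrec U ∧ ∀ M : BStr →. BStr, Partrec M →
    ∃ c : ℕ, ∀ p x, x ∈ M p → ∃ q : BStr, q.length ≤ p.length + c ∧ x ∈ U q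

/-- The domain of `M` is an antichain under the prefix relation. -/
def PrefixFreeDom (M : BStr →. BStr) : Prop :=
  ∀ p q : BStr, (M p).Dom → (M q).Dom → p <+: q → p = q

/-- `U` is a universal prefix-free machine. -/
def UniversalPrefixFree (U : BStr →. BStr) : Prop :=
  Partrec U ∧ PrefixFreeDom U ∧
  ∀ M : BStr →. BStr, Partrec M → PrefixFreeDom M →
    ∃ c : ℕ, ∀ p x, x ∈ M p → ∃ q : BStr, q.length ≤ p.length + c ∧ x ∈ U q

/-- Kolmogorov complexity of the string `x` with respect to the machine `U`:
the minimal length of a `U`-description of `x`. -/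
noncomputable def cpx (U : BStr →. BStr) (x : BStr) : ℕ :=
  sInf {n | ∃ q : BStr, q.length = n ∧ x ∈ U q}

/-- A natural number `n` identified with the string `0^n`. -/
def numStr (n : ℕ) : BStr := List.replicate n false

/-- Complexity of the natural number `n` (i.e., of the string `0^n`). -/
noncomputable def cpxN (U : BStr →. BStr) (n : ℕ) : ℕ := cpx U (numStr n)

/-- The `μ`-average complexity of the strings of length `n`:
`Σ_{|x|=n} cpx(x) · μ[x]`. -/
noncomputable def avgCpx (U : BStr →. BStr) (μ : Measure Cantor) (n : ℕ) : ℝ :=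
  ∑ v : Fin n → Bool, (cpx U (List.ofFn v) : ℝ) * (μ (cyl (List.ofFn v))).toReal

/-- A measure `μ` is trivial for the complexity given by the machine `U`
(e.g. K-trivial when `U` is the universal prefix-free machine, C-trivial
when `U` is the universal plain machine). -/
def MeasTrivial (U : BStr →. BStr) (μ : Measure Cantor) : Prop :=
  ∃ c : ℝ, ∀ n : ℕ, avgCpx U μ n ≤ (cpxN U n : ℝ) + c

/-- The join map `(A, B) ↦ A ⊕ B` identifying `2^ℕ × 2^ℕ` with `2^ℕ`:
`(A⊕B)(2n) = A(n)` and `(A⊕B)(2n+1) = B(n)`. -/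
def join (p : Cantor × Cantor) : Cantor :=
  fun n => if n % 2 = 0 then p.1 (n / 2) else p.2 (n / 2)


/-! ### Enumeration of a set given by a primitive recursive enumeration -/

def seenL {β : Type} [DecidableEq β] (q : ℕ → Option β) : ℕ → List β
  | 0 => []
  | t + 1 => match q t with
    | none => seenL q t
    | some x => if (seenL q t).idxOf x < (seenL q t).length then seenL q t else seenL q t ++ [x]

theorem seenL_prefix_succ {β : Type} [DecidableEq β] (q : ℕ → Option β) (t : ℕ) :
    seenL q t <+: seenL q (t + 1) := by
  simp only [seenL]
  split
  · exact List.prefix_rfl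
  · split
    · exact List.prefix_rfl
    · exact List.prefix_append _ _

theorem seenL_prefix {β : Type} [DecidableEq β] (q : ℕ → Option β) {s t : ℕ} (h : s ≤ t) :
    seenL q s <+: seenL q t := by
  induction h with
  | refl => exact List.prefix_rfl
  | step _ ih => exact ih.trans (seenL_prefix_succ q _)

theorem seenL_nodup {β : Type} [DecidableEq β] (q : ℕ → Option β) (t : ℕ) :
    (seenL q t).Nodup := by
  induction t with
  | zero => simp [seenL]
  | succ t ih =>
    simp only [seenL]
    split
    · exact ih
    · split
      · exact ih
      · rename_i h
        rw [List.idxOf_lt_length_iff] at h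
        rw [List.nodup_append]
        refine ⟨ih, by simp, ?_⟩
        intro a ha b hb
        simp at hb
        subst hb
        rintro rfl
        exact h ha

theorem seenL_mem_sound {β : Type} [DecidableEq β] (q : ℕ → Option β) (t : ℕ) (x : β)
    (h : x ∈ seenL q t) : ∃ s, q s = some x := by
  induction t with
  | zero => simp [seenL] at h
  | succ t ih =>
    simp only [seenL] at h
    split at h
    · exact ih h
    · rename_i y hy
      split at h
      · exact ih h
      · rw [List.mem_append] at h
        rcases h with h | h
        · exact ih h
        · simp at h
          subst h
          exact ⟨t, hy⟩

theorem seenL_mem_complete {β : Type} [DecidableEq β] (q : ℕ → Option β) (t : ℕ) (x : β)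
    (h : q t = some x) : x ∈ seenL q (t + 1) := by
  simp only [seenL, h]
  split
  · rename_i h
    rwa [List.idxOf_lt_length_iff] at h
  · simp

theorem seenL_primrec {α β : Type} [Primcodable α] [Primcodable β] [DecidableEq β]
    (Q : α → ℕ → Option β) (hQ : Primrec₂ Q) : Primrec₂ fun a t => seenL (Q a) t := by
  have step : Primrec₂ (fun (a : α) (p : ℕ × List β) =>
      (Option.casesOn (Q a p.1) p.2
        (fun x => if p.2.idxOf x < p.2.length then p.2 else p.2 ++ [x]) : List β)) := by
    have h1 : Primrec (fun z : α × (ℕ × List β) => Q z.1 z.2.1) :=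
      hQ.comp Primrec.fst (Primrec.fst.comp Primrec.snd)
    have hl : Primrec (fun z : (α × (ℕ × List β)) × β => z.1.2.2) :=
      Primrec.snd.comp (Primrec.snd.comp Primrec.fst)
    have hx : Primrec (fun z : (α × (ℕ × List β)) × β => z.2) := Primrec.snd
    refine Primrec.option_casesOn h1 (Primrec.snd.comp Primrec.snd) ?_
    refine Primrec.ite ?_ hl ?_
    · exact Primrec.nat_lt.comp (Primrec.list_idxOf.comp hx hl) (Primrec.list_length.comp hl)
    · exact Primrec.list_concat.comp hl hx
  refine (Primrec.nat_rec (f := fun _ : α => ([] : List β)) (Primrec.const []) step).of_eq ?_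
  intro a t
  induction t with
  | zero => rfl
  | succ t ih =>
    simp only [seenL]
    rw [← ih]
    cases Q a t <;> rfl

theorem enum_lemma {α β : Type} [Primcodable α] [Primcodable β] [DecidableEq β]
    (Q : α → ℕ → Option β) (hQ : Primrec₂ Q) :
    ∃ F : α × ℕ →. β, Partrec F ∧ ∀ (a : α) (N : ℕ),
      (∀ S : Finset β, (∀ y ∈ S, ∃ t, Q a t = some y) → S.card ≤ N) →
      ∀ x, (∃ t, Q a t = some x) → ∃ i < N, x ∈ F (a, i) := by
  refine ⟨fun z => Nat.rfindOpt fun t => (seenL (Q z.1) t)[z.2]?, ?_, ?_⟩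
  · apply Partrec.rfindOpt
    apply Primrec₂.to_comp
    exact Primrec.list_getElem?.comp
      ((seenL_primrec Q hQ).comp (Primrec.fst.comp Primrec.fst) Primrec.snd)
      (Primrec.snd.comp Primrec.fst)
  · rintro a N hN x ⟨t, ht⟩
    have hx := seenL_mem_complete _ _ _ ht
    obtain ⟨i, hi, hix⟩ := List.getElem_of_mem hx
    refine ⟨i, ?_, ?_⟩
    · refine lt_of_lt_of_le hi ?_
      rw [← List.toFinset_card_of_nodup (seenL_nodup (Q a) (t + 1))]
      apply hN
      intro y hy
      exact seenL_mem_sound _ _ _ (List.mem_toFinset.1 hy)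
    · rw [Nat.rfindOpt_mono]
      · exact ⟨t + 1, by simp [List.getElem?_eq_getElem hi, hix]⟩
      · intro b m n hmn hb
        simp only [Option.mem_def] at hb ⊢
        obtain ⟨r, hr⟩ := seenL_prefix (Q a) hmn
        rw [← hr, List.getElem?_append_left (List.getElem?_eq_some_iff.1 hb).1]
        exact hb

/-! ### Step-bounded evaluation -/

theorem step_lemma (U : BStr →. BStr) (hU : Partrec U) :
    ∃ st : ℕ → BStr → Option BStr, Primrec₂ st ∧
      (∀ p x, x ∈ U p ↔ ∃ k, st k p = some x) ∧
      (∀ k l p x, k ≤ l → st k p = some x → st l p = some x) := by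
  obtain ⟨c, hc⟩ := Nat.Partrec.Code.exists_code.1 hU
  have key : ∀ (p : BStr), c.eval (Encodable.encode p) = (U p).map Encodable.encode := by
    intro p; rw [hc]; simp
  refine ⟨fun k p => (Nat.Partrec.Code.evaln k c (Encodable.encode p)).bind
    (fun y => (Encodable.decode y : Option BStr)), ?_, ?_, ?_⟩
  · refine Primrec.option_bind ?_ (Primrec.decode.comp Primrec.snd)
    exact Nat.Partrec.Code.primrec_evaln.comp
      (Primrec.pair (Primrec.pair Primrec.fst (Primrec.const c)) (Primrec.encode.comp Primrec.snd))
  · intro p x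
    constructor
    · intro hx
      have : Encodable.encode x ∈ c.eval (Encodable.encode p) := by
        rw [key]; exact Part.mem_map _ hx
      obtain ⟨k, hk⟩ := Nat.Partrec.Code.evaln_complete.1 this
      refine ⟨k, ?_⟩
      rw [Option.mem_def] at hk
      simp [hk]
    · rintro ⟨k, hk⟩
      rw [Option.bind_eq_some_iff] at hk
      obtain ⟨y, hy, hyx⟩ := hk
      have := Nat.Partrec.Code.evaln_sound hy
      rw [key, Part.mem_map_iff] at this
      obtain ⟨z, hz, rfl⟩ := this
      simp at hyx
      exact hyx ▸ hz
  · intro k l p x hkl h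
    rw [Option.bind_eq_some_iff] at h ⊢
    obtain ⟨y, hy, hyx⟩ := h
    exact ⟨y, Nat.Partrec.Code.evaln_mono hkl hy, hyx⟩

/-! ### Numbers coded by bit strings -/

def natOf : BStr → ℕ
  | [] => 0
  | b :: l => (if b then 1 else 0) + 2 * natOf l

theorem natOf_surj (l : ℕ) : ∀ i < 2 ^ l, ∃ v : BStr, v.length = l ∧ natOf v = i := by
  induction l with
  | zero => intro i hi; exact ⟨[], rfl, by simp at hi; simp [natOf, hi]⟩
  | succ l ih =>
    intro i hi
    obtain ⟨v, hv, hvi⟩ := ih (i / 2) (by rw [pow_succ] at hi; omega)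
    refine ⟨decide (i % 2 = 1) :: v, by simp [hv], ?_⟩
    simp only [natOf, hvi]
    by_cases h : i % 2 = 1 <;> simp [h] <;> omega

theorem natOf_primrec : Primrec natOf := by
  have h : Primrec₂ (fun (_ : BStr) (z : Bool × ℕ) => (if z.1 then 1 else 0) + 2 * z.2) := by
    refine Primrec.nat_add.comp ?_ ?_
    · exact (Primrec.dom_bool (fun b : Bool => if b then 1 else 0)).comp
        (Primrec.fst.comp Primrec.snd)
    · exact Primrec.nat_double.comp (Primrec.snd.comp Primrec.snd)
  refine (Primrec.list_foldr (f := fun l : BStr => l) (g := fun _ => 0) Primrec.id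
    (Primrec.const 0) h).of_eq ?_
  intro l
  induction l with
  | nil => rfl
  | cons b l ih => simp only [List.foldr_cons, natOf]; rw [← ih]

theorem pow_primrec : Primrec₂ (fun a b : ℕ => a ^ b) := Primrec₂.unpaired'.1 Nat.Primrec.pow

theorem numStr_primrec : Primrec numStr := by
  refine (Primrec.list_map (f := fun n : ℕ => List.range n) (g := fun _ _ => false)
    Primrec.list_range (Primrec₂.const false)).of_eq ?_
  intro n
  simp [numStr]

/-! ### Complexity bounds from machines -/

theorem cpx_le_of_mem (U : BStr →. BStr) {q x : BStr} (h : x ∈ U q) : cpx U x ≤ q.length :=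
  Nat.sInf_le ⟨q, rfl, h⟩

theorem cpx_attained (U : BStr →. BStr) (hU : UniversalPlain U) (x : BStr) :
    ∃ q : BStr, q.length = cpx U x ∧ x ∈ U q := by
  obtain ⟨c, hc⟩ := hU.2 (fun p => Part.some p) Partrec.some
  obtain ⟨q, -, hq⟩ := hc x x (Part.mem_some x)
  exact Nat.sInf_mem (s := {n | ∃ q : BStr, q.length = n ∧ x ∈ U q}) ⟨q.length, q, rfl, hq⟩

theorem machine_lemma (U : BStr →. BStr) (hU : UniversalPlain U) (a : ℕ)
    (G : ℕ × ℕ × BStr →. BStr) (hG : Partrec G) :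
    ∃ c : ℕ, ∀ (j i : ℕ) (q x : BStr), i < 2 ^ (a * j) → x ∈ G (j, i, q) →
      cpx U x ≤ (a + 1) * j + q.length + c := by
  let J : BStr → ℕ := fun w => w.idxOf false
  have hJ : Primrec J := Primrec.list_idxOf.comp (Primrec.const false) Primrec.id
  let R : BStr → BStr := fun w => w.drop (J w + 1)
  have hR : Primrec R := Primrec.list_drop.comp (Primrec.succ.comp hJ) Primrec.id
  have haJ : Primrec (fun w => a * J w) := Primrec.nat_mul.comp (Primrec.const a) hJ
  let P : BStr → ℕ × ℕ × BStr := fun w =>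
    (J w, natOf ((R w).take (a * J w)), (R w).drop (a * J w))
  have hP : Primrec P := Primrec.pair hJ (Primrec.pair
    (natOf_primrec.comp (Primrec.list_take.comp haJ hR)) (Primrec.list_drop.comp haJ hR))
  obtain ⟨c, hc⟩ := hU.2 (fun w => G (P w)) (hG.comp hP.to_comp)
  refine ⟨c + 1, ?_⟩
  intro j i q x hi hx
  obtain ⟨v, hv, hvi⟩ := natOf_surj _ _ hi
  let w : BStr := List.replicate j true ++ (false :: (v ++ q))
  have hJw : J w = j := by
    simp only [J, w]
    rw [List.idxOf_append_of_notMem (by simp)]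
    simp
  have hRw : R w = v ++ q := by
    simp only [R, hJw, w]
    rw [List.drop_append]
    simp
  have hPw : P w = (j, i, q) := by
    simp only [P, hJw, hRw, ← hv]
    simp [hvi]
  obtain ⟨r, hr, hxr⟩ := hc w x (by rw [hPw]; exact hx)
  refine (cpx_le_of_mem U hxr).trans (hr.trans ?_)
  simp [w, hv]
  ring_nf
  omega

/-! ### Counting -/

def strsLe : ℕ → List BStr
  | 0 => [[]]
  | m + 1 => [] :: ((strsLe m).map (List.cons false) ++ (strsLe m).map (List.cons true))

theorem mem_strsLe (m : ℕ) : ∀ p : BStr, p ∈ strsLe m ↔ p.length ≤ m := by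
  induction m with
  | zero => intro p; simp [strsLe]
  | succ m ih =>
    intro p
    rcases p with _ | ⟨b, p⟩
    · simp [strsLe]
    · cases b <;> simp [strsLe, ih]

theorem length_strsLe (m : ℕ) : (strsLe m).length + 1 = 2 ^ (m + 1) := by
  induction m with
  | zero => rfl
  | succ m ih =>
    simp only [strsLe, List.length_cons, List.length_append, List.length_map]
    rw [pow_succ]
    omega

theorem strsLe_primrec : Primrec strsLe := by
  have h : Primrec₂ (fun (_ : ℕ) (l : List BStr) =>
      [] :: (l.map (List.cons false) ++ l.map (List.cons true))) := by
    have hm : ∀ b : Bool, Primrec (fun z : ℕ × List BStr => z.2.map (List.cons b)) := fun b =>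
      Primrec.list_map Primrec.snd (Primrec.list_cons.comp (Primrec.const b) Primrec.snd)
    exact Primrec.list_cons.comp (Primrec.const []) (Primrec.list_append.comp (hm false) (hm true))
  refine (Primrec.nat_rec₁ [[]] h).of_eq ?_
  intro m
  induction m with
  | zero => rfl
  | succ m ih => simp only [strsLe]; rw [← ih]

theorem chaitin (U : BStr →. BStr) (hU : UniversalPlain U) :
    ∃ c : ℕ, ∀ (n d : ℕ) (S : Finset BStr),
      (∀ p ∈ S, p.length ≤ cpxN U n + d ∧ ∃ x ∈ U p, x.length = n) →
      S.card ≤ 2 ^ (2 * (d + c)) := by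
  classical
  obtain ⟨st, hst, hmem, hmono⟩ := step_lemma U hU.1
  have hRel : PrimrecRel (fun (p : BStr) (z : ℕ × ℕ) =>
      (st z.2 p).map List.length = some z.1) := by
    refine Primrec.eq.comp ?_ ?_
    · exact Primrec.option_map (hst.comp (Primrec.snd.comp Primrec.snd) Primrec.fst)
        (Primrec.list_length.comp Primrec.snd)
    · exact Primrec.option_some.comp (Primrec.fst.comp Primrec.snd)
  let L : ℕ → ℕ × ℕ → List BStr := fun m z =>
    (strsLe m).filter (fun p => (st z.2 p).map List.length = some z.1)
  have hL : Primrec₂ L := (PrimrecRel.listFilter hRel).comp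
    (strsLe_primrec.comp Primrec.fst) Primrec.snd
  let Q : ℕ × ℕ → ℕ → Option ℕ := fun a t =>
    if 2 ^ a.2 ≤ (L a.1 t.unpair).length then some t.unpair.1 else none
  have hQ : Primrec₂ Q := by
    refine Primrec.ite (Primrec.nat_le.comp ?_ ?_) ?_ (Primrec.const none)
    · exact pow_primrec.comp (Primrec.const 2) (Primrec.snd.comp Primrec.fst)
    · exact Primrec.list_length.comp
        (hL.comp (Primrec.fst.comp Primrec.fst) (Primrec.unpair.comp Primrec.snd))
    · exact Primrec.option_some.comp (Primrec.fst.comp (Primrec.unpair.comp Primrec.snd))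
  have hLnodup : ∀ m z, (L m z).Nodup := by
    have : ∀ m, (strsLe m).Nodup := by
      intro m
      induction m with
      | zero => simp [strsLe]
      | succ m ih =>
        simp only [strsLe, List.nodup_cons, List.nodup_append]
        refine ⟨by simp, ih.map (List.cons_injective), ih.map (List.cons_injective), ?_⟩
        simp
    exact fun m z => (this m).filter _
  -- the number of `n` with many programs
  have hcount : ∀ (m k : ℕ) (S : Finset ℕ), (∀ n ∈ S, ∃ t, Q (m, k) t = some n) →
      S.card * 2 ^ k ≤ 2 ^ (m + 1) := by
    intro m k S hS
    let T : ℕ → Finset BStr := fun n =>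
      (strsLe m).toFinset.filter (fun p => ∃ x ∈ U p, x.length = n)
    have hT : ∀ n ∈ S, 2 ^ k ≤ (T n).card := by
      intro n hn
      obtain ⟨t, ht⟩ := hS n hn
      simp only [Q] at ht
      split at ht
      · rename_i h
        refine h.trans ?_
        simp only [Option.some.injEq] at ht
        rw [← List.toFinset_card_of_nodup (hLnodup m t.unpair)]
        apply Finset.card_le_card
        intro p hp
        simp only [L, List.mem_toFinset, List.mem_filter, decide_eq_true_eq, ht,
          Option.map_eq_some_iff] at hp
        obtain ⟨h1, x, hx, hxn⟩ := hp
        simp only [T, Finset.mem_filter, List.mem_toFinset]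
        exact ⟨h1, x, (hmem p x).2 ⟨_, hx⟩, hxn⟩
      · simp at ht
    have hdisj : (S : Set ℕ).PairwiseDisjoint T := by
      intro n _ n' _ hne
      rw [Function.onFun, Finset.disjoint_left]
      intro p hp hp'
      simp only [T, Finset.mem_filter] at hp hp'
      obtain ⟨-, x, hx, rfl⟩ := hp
      obtain ⟨-, y, hy, rfl⟩ := hp'
      exact hne (by rw [Part.mem_unique hx hy])
    calc S.card * 2 ^ k = ∑ _n ∈ S, 2 ^ k := by simp
      _ ≤ ∑ n ∈ S, (T n).card := Finset.sum_le_sum hT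
      _ = (S.biUnion T).card := (Finset.card_biUnion hdisj).symm
      _ ≤ (strsLe m).toFinset.card := by
        apply Finset.card_le_card
        intro p hp
        rw [Finset.mem_biUnion] at hp
        obtain ⟨n, -, hp⟩ := hp
        exact (Finset.mem_filter.1 hp).1
      _ ≤ (strsLe m).length := List.toFinset_card_le _
      _ ≤ 2 ^ (m + 1) := by rw [← length_strsLe]; omega
  obtain ⟨F, hF, hFspec⟩ := enum_lemma Q hQ
  let G : ℕ × ℕ × BStr →. BStr := fun z =>
    (F ((z.2.2.length + 2 * z.1 - 1, 2 * z.1), natOf z.2.2)).map numStr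
  have hG : Partrec G := by
    have hq : Primrec (fun z : ℕ × ℕ × BStr => z.2.2) := Primrec.snd.comp Primrec.snd
    have h2 : Primrec (fun z : ℕ × ℕ × BStr => 2 * z.1) := Primrec.nat_double.comp Primrec.fst
    refine Partrec.map (hF.comp (Primrec.to_comp ?_)) (numStr_primrec.comp Primrec.snd).to_comp
    exact Primrec.pair (Primrec.pair (Primrec.nat_sub.comp
      (Primrec.nat_add.comp (Primrec.list_length.comp hq) h2) (Primrec.const 1)) h2)
      (natOf_primrec.comp hq)
  obtain ⟨c, hc⟩ := machine_lemma U hU 0 G hG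
  refine ⟨c + 2, ?_⟩
  intro n d S hS
  by_contra hcard
  push Not at hcard
  set j := d + (c + 2) with hj
  set m := cpxN U n + d with hm
  -- a common stage
  have hstage : ∃ s, ∀ p ∈ S, (st s p).map List.length = some n := by
    have h1 : ∀ p ∈ S, ∃ s x, st s p = some x ∧ x.length = n := by
      intro p hp
      obtain ⟨-, x, hx, hxn⟩ := hS p hp
      obtain ⟨s, hs⟩ := (hmem p x).1 hx
      exact ⟨s, x, hs, hxn⟩
    choose! f hf using h1
    refine ⟨S.sup f, fun p hp => ?_⟩
    obtain ⟨x, hx, hxn⟩ := hf p hp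
    rw [hmono _ _ _ _ (Finset.le_sup hp) hx]
    simp [hxn]
  obtain ⟨s, hs⟩ := hstage
  have hQn : Q (m, 2 * j) (Nat.pair n s) = some n := by
    have : 2 ^ (2 * j) ≤ (L m (n, s)).length := by
      refine hcard.le.trans ?_
      rw [← List.toFinset_card_of_nodup (hLnodup m (n, s))]
      apply Finset.card_le_card
      intro p hp
      simp only [L, List.mem_toFinset, List.mem_filter, decide_eq_true_eq, mem_strsLe]
      exact ⟨(hS p hp).1, hs p hp⟩
    simp [Q, this]
  have hjm : 2 * j ≤ m + 1 := by
    have := hcount m (2 * j) {n} (by simp only [Finset.mem_singleton]; rintro _ rfl; exact ⟨_, hQn⟩)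
    rw [Finset.card_singleton, one_mul] at this
    exact (Nat.pow_le_pow_iff_right (by norm_num)).1 this
  obtain ⟨i, hi, hFi⟩ := hFspec (m, 2 * j) (2 ^ (m + 1 - 2 * j)) (by
    intro S' hS'
    have := hcount m (2 * j) S' hS'
    have h2 : 2 ^ (m + 1) = 2 ^ (m + 1 - 2 * j) * 2 ^ (2 * j) := by
      rw [← pow_add]; congr 1; omega
    rw [h2] at this
    exact Nat.le_of_mul_le_mul_right this (by positivity)) n ⟨_, hQn⟩
  obtain ⟨v, hv, hvi⟩ := natOf_surj _ _ hi
  have := hc j 0 v (numStr n) (by simp) (by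
    simp only [G, hv, hvi]
    refine Part.mem_map _ ?_
    convert hFi using 3
    congr 1
    omega)
  change cpxN U n ≤ _ at this
  omega

/-! ### The pointwise bound -/

def jn (N : ℕ) (x y : BStr) : BStr :=
  (List.range N).map fun i => if i % 2 = 0 then x.getD (i / 2) false else y.getD (i / 2) false

theorem jn_primrec : Primrec (fun z : ℕ × BStr × BStr => jn z.1 z.2.1 z.2.2) := by
  refine Primrec.list_map (Primrec.list_range.comp Primrec.fst) ?_
  have hi : Primrec (fun z : (ℕ × BStr × BStr) × ℕ => z.2 / 2) :=
    Primrec.nat_div.comp Primrec.snd (Primrec.const 2)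
  refine Primrec.ite (Primrec.eq.comp (Primrec.nat_mod.comp Primrec.snd (Primrec.const 2))
    (Primrec.const 0)) ?_ ?_
  · exact (Primrec.list_getD false).comp
      (Primrec.fst.comp (Primrec.snd.comp Primrec.fst)) hi
  · exact (Primrec.list_getD false).comp
      (Primrec.snd.comp (Primrec.snd.comp Primrec.fst)) hi

theorem jn_aux : Primrec (fun u : (((ℕ × ℕ × BStr) × BStr) × BStr) × BStr =>
    jn u.1.1.2.length u.1.2 u.2) := by
  have k1 : Primrec (fun u : (((ℕ × ℕ × BStr) × BStr) × BStr) × BStr => u.1.1.2.length) :=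
    Primrec.list_length.comp (Primrec.snd.comp (Primrec.fst.comp Primrec.fst))
  have k2 : Primrec (fun u : (((ℕ × ℕ × BStr) × BStr) × BStr) × BStr => (u.1.2, u.2)) :=
    Primrec.pair (Primrec.snd.comp Primrec.fst) Primrec.snd
  have k3 := jn_primrec.comp (k1.pair k2)
  exact k3

theorem num_map_lemma (U : BStr →. BStr) (hU : UniversalPlain U) (h : ℕ → ℕ → ℕ)
    (hh : Primrec₂ h) :
    ∃ c : ℕ, ∀ n e, cpxN U (h n e) ≤ cpxN U n + e + c := by
  let G : ℕ × ℕ × BStr →. BStr := fun z => (U z.2.2).map (fun y => numStr (h y.length z.1))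
  have hG : Partrec G := by
    refine Partrec.map (hU.1.comp (Primrec.snd.comp Primrec.snd).to_comp) ?_
    apply Primrec₂.to_comp
    exact numStr_primrec.comp (hh.comp (Primrec.list_length.comp Primrec.snd)
      (Primrec.fst.comp Primrec.fst))
  obtain ⟨c, hc⟩ := machine_lemma U hU 0 G hG
  refine ⟨c, fun n e => ?_⟩
  obtain ⟨q, hq, hqn⟩ := cpx_attained U hU (numStr n)
  have := hc e 0 q (numStr (h n e)) (by simp) (by
    have := Part.mem_map (fun y : BStr => numStr (h y.length e)) hqn
    simpa [G, numStr] using this)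
  unfold cpxN
  omega

theorem enum_out (U : BStr →. BStr) (hU : UniversalPlain U) :
    ∃ F : (ℕ × ℕ) × ℕ →. BStr, Partrec F ∧ ∀ (n m N : ℕ),
      (∀ S : Finset BStr, (∀ p ∈ S, p.length ≤ m ∧ ∃ x ∈ U p, x.length = n) → S.card ≤ N) →
      ∀ x : BStr, x.length = n → cpx U x ≤ m → ∃ i < N, x ∈ F ((n, m), i) := by
  obtain ⟨st, hst, hmem, hmono⟩ := step_lemma U hU.1
  let Q : ℕ × ℕ → ℕ → Option BStr := fun a t =>
    (Encodable.decode t : Option (BStr × ℕ)).bind fun z =>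
      if z.1.length ≤ a.2 ∧ (st z.2 z.1).map List.length = some a.1 then some z.1 else none
  have hQ : Primrec₂ Q := by
    refine Primrec.option_bind (Primrec.decode.comp Primrec.snd) ?_
    have hp : Primrec (fun w : ((ℕ × ℕ) × ℕ) × (BStr × ℕ) => w.2.1) :=
      Primrec.fst.comp Primrec.snd
    have hs : Primrec (fun w : ((ℕ × ℕ) × ℕ) × (BStr × ℕ) => w.2.2) :=
      Primrec.snd.comp Primrec.snd
    have ha : Primrec (fun w : ((ℕ × ℕ) × ℕ) × (BStr × ℕ) => w.1.1) :=
      Primrec.fst.comp Primrec.fst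
    refine Primrec.ite (PrimrecPred.and ?_ ?_) (Primrec.option_some.comp hp) (Primrec.const none)
    · exact Primrec.nat_le.comp (Primrec.list_length.comp hp) (Primrec.snd.comp ha)
    · refine Primrec.eq.comp ?_ (Primrec.option_some.comp (Primrec.fst.comp ha))
      exact Primrec.option_map (hst.comp hs hp) (Primrec.list_length.comp Primrec.snd)
  have hQspec : ∀ n m p, (∃ t, Q (n, m) t = some p) ↔
      (p.length ≤ m ∧ ∃ x ∈ U p, x.length = n) := by
    intro n m p
    constructor
    · rintro ⟨t, ht⟩
      simp only [Q, Option.bind_eq_some_iff] at ht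
      obtain ⟨⟨p', s⟩, -, h⟩ := ht
      split at h
      · rename_i h'
        simp only [Option.some.injEq] at h
        subst h
        obtain ⟨h1, h2⟩ := h'
        rw [Option.map_eq_some_iff] at h2
        obtain ⟨x, hx, hxn⟩ := h2
        exact ⟨h1, x, (hmem _ _).2 ⟨_, hx⟩, hxn⟩
      · simp at h
    · rintro ⟨h1, x, hx, hxn⟩
      obtain ⟨s, hs⟩ := (hmem _ _).1 hx
      refine ⟨Encodable.encode (p, s), ?_⟩
      simp [Q, h1, hs, hxn]
  obtain ⟨F, hF, hFspec⟩ := enum_lemma Q hQ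
  refine ⟨fun z => (F z).bind U, hF.bind (hU.1.comp Computable.snd), ?_⟩
  intro n m N hN x hxn hx
  obtain ⟨p, hp, hpx⟩ := cpx_attained U hU x
  obtain ⟨i, hi, hFi⟩ := hFspec (n, m) N (fun S hS => hN S fun p hp => (hQspec n m p).1 (hS p hp))
    p ((hQspec n m p).2 ⟨hp.trans_le hx, x, hpx, hxn⟩)
  exact ⟨i, hi, Part.mem_bind hFi hpx⟩

set_option maxHeartbeats 1000000 in
theorem pointwise (U : BStr →. BStr) (hU : UniversalPlain U) :
    ∃ c : ℕ, ∀ (N : ℕ) (x y : BStr), x.length = (N + 1) / 2 → y.length = N / 2 →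
      cpx U (jn N x y) ≤ cpxN U N +
        7 * ((cpx U x - cpxN U ((N + 1) / 2)) + (cpx U y - cpxN U (N / 2))) + c := by
  obtain ⟨F, hF, hFspec⟩ := enum_out U hU
  obtain ⟨cc, hcc⟩ := chaitin U hU
  obtain ⟨c1, hc1⟩ := num_map_lemma U hU (fun n e => (n + e) / 2)
    (Primrec.nat_div.comp Primrec.nat_add (Primrec.const 2))
  obtain ⟨c2, hc2⟩ := num_map_lemma U hU (fun n e => 2 * n + e - 1)
    (Primrec.nat_sub.comp (Primrec.nat_add.comp (Primrec.nat_double.comp Primrec.fst)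
      Primrec.snd) (Primrec.const 1))
  let G : ℕ × ℕ × BStr →. BStr := fun z => (U z.2.2).bind fun w =>
    (F (((w.length + 1) / 2, z.2.2.length + z.1), z.2.1 % 2 ^ (3 * z.1))).bind fun x =>
      (F ((w.length / 2, z.2.2.length + z.1), z.2.1 / 2 ^ (3 * z.1))).map fun y =>
        jn w.length x y
  have hG : Partrec G := by
    have hm : Primrec (fun z : ℕ × ℕ × BStr => z.2.2.length + z.1) := Primrec.nat_add.comp
      (Primrec.list_length.comp (Primrec.snd.comp Primrec.snd)) Primrec.fst
    have hpow : Primrec (fun z : ℕ × ℕ × BStr => 2 ^ (3 * z.1)) :=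
      pow_primrec.comp (Primrec.const 2) (Primrec.nat_mul.comp (Primrec.const 3) Primrec.fst)
    have hi : Primrec (fun z : ℕ × ℕ × BStr => z.2.1) := Primrec.fst.comp Primrec.snd
    refine Partrec.bind (hU.1.comp (Primrec.snd.comp Primrec.snd).to_comp) ?_
    have hw : Primrec (fun v : (ℕ × ℕ × BStr) × BStr => v.2.length) :=
      Primrec.list_length.comp Primrec.snd
    have a1 : Primrec (fun v : (ℕ × ℕ × BStr) × BStr =>
        (((v.2.length + 1) / 2, v.1.2.2.length + v.1.1), v.1.2.1 % 2 ^ (3 * v.1.1))) :=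
      Primrec.pair (Primrec.pair (Primrec.nat_div.comp (Primrec.succ.comp hw) (Primrec.const 2))
        (hm.comp Primrec.fst))
        (Primrec.nat_mod.comp (hi.comp Primrec.fst) (hpow.comp Primrec.fst))
    have a2 : Primrec (fun v : (ℕ × ℕ × BStr) × BStr =>
        ((v.2.length / 2, v.1.2.2.length + v.1.1), v.1.2.1 / 2 ^ (3 * v.1.1))) :=
      Primrec.pair (Primrec.pair (Primrec.nat_div.comp hw (Primrec.const 2))
        (hm.comp Primrec.fst))
        (Primrec.nat_div.comp (hi.comp Primrec.fst) (hpow.comp Primrec.fst))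
    have b1 := hF.comp a1.to_comp
    have b2 := hF.comp (a2.comp (Primrec.fst (β := BStr))).to_comp
    exact Partrec.bind b1 (Partrec.map b2 jn_aux.to_comp)
  obtain ⟨c, hc⟩ := machine_lemma U hU 6 G hG
  set B := (c1 + 1) + 2 * (c2 + 2 + cc) with hB
  refine ⟨7 * B + c, ?_⟩
  intro N x y hx hy
  set dx := cpx U x - cpxN U ((N + 1) / 2) with hdx
  set dy := cpx U y - cpxN U (N / 2) with hdy
  obtain ⟨j, hj⟩ : ∃ j, j = dx + dy + B := ⟨_, rfl⟩
  obtain ⟨q, hq, hqN⟩ := cpx_attained U hU (numStr N)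
  change q.length = cpxN U N at hq
  have hgen : ∀ n, cpxN U N ≤ cpxN U n + 2 + c2 → ∀ x : BStr, x.length = n →
      cpx U x ≤ cpxN U N + j → ∃ i < 2 ^ (3 * j), x ∈ F ((n, q.length + j), i) := by
    intro n hn x hxn hxc
    refine hFspec n (q.length + j) (2 ^ (3 * j)) ?_ x hxn (by omega)
    intro S hS
    refine (hcc n (2 + c2 + j) S ?_).trans ?_
    · intro p hp
      obtain ⟨h1, h2⟩ := hS p hp
      exact ⟨by omega, h2⟩
    · apply Nat.pow_le_pow_right (by norm_num)
      omega
  have e1 : cpxN U N ≤ cpxN U ((N + 1) / 2) + 2 + c2 := by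
    have := hc2 ((N + 1) / 2) (1 - N % 2)
    have h : 2 * ((N + 1) / 2) + (1 - N % 2) - 1 = N ∨ N = 0 := by omega
    have h' := hc2 ((N + 1) / 2) 0
    have h'' : N % 2 = 0 → 2 * ((N + 1) / 2) + (1 - N % 2) - 1 = N := by omega
    have h3 : N % 2 = 1 → 2 * ((N + 1) / 2) + 0 - 1 = N := by omega
    rcases Nat.mod_two_eq_zero_or_one N with h4 | h4
    · rw [h'' h4] at this; omega
    · rw [h3 h4] at h'; omega
  have e2 : cpxN U N ≤ cpxN U (N / 2) + 2 + c2 := by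
    have := hc2 (N / 2) (N % 2 + 1)
    have h : 2 * (N / 2) + (N % 2 + 1) - 1 = N := by omega
    rw [h] at this
    omega
  have f1 := hc1 N 1
  have f2 := hc1 N 0
  simp only [add_zero] at f2
  obtain ⟨i1, hi1, hF1⟩ := hgen _ e1 x hx (by omega)
  obtain ⟨i2, hi2, hF2⟩ := hgen _ e2 y hy (by omega)
  have hlt : i1 + 2 ^ (3 * j) * i2 < 2 ^ (6 * j) := by
    have : 2 ^ (6 * j) = 2 ^ (3 * j) * 2 ^ (3 * j) := by rw [← pow_add]; congr 1; omega
    rw [this]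
    calc i1 + 2 ^ (3 * j) * i2 < 2 ^ (3 * j) + 2 ^ (3 * j) * i2 := by omega
      _ = 2 ^ (3 * j) * (i2 + 1) := by ring
      _ ≤ _ := Nat.mul_le_mul_left _ hi2
  have := hc j (i1 + 2 ^ (3 * j) * i2) q (jn N x y) hlt (by
    have hN : (numStr N).length = N := by simp [numStr]
    have hmod : (i1 + 2 ^ (3 * j) * i2) % 2 ^ (3 * j) = i1 := by
      rw [Nat.add_mul_mod_self_left, Nat.mod_eq_of_lt hi1]
    have hdiv : (i1 + 2 ^ (3 * j) * i2) / 2 ^ (3 * j) = i2 := by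
      rw [Nat.add_mul_div_left _ _ (by positivity), Nat.div_eq_of_lt hi1, zero_add]
    simp only [G]
    refine Part.mem_bind hqN ?_
    rw [hN, hmod, hdiv]
    exact Part.mem_bind hF1 (Part.mem_map _ hF2))
  omega

/-! ### Averages as integrals -/

theorem measurable_restr (n : ℕ) : Measurable (fun (Z : Cantor) (i : Fin n) => Z i.1) :=
  measurable_pi_lambda _ fun _ => measurable_pi_apply _

theorem integrable_seg (f : BStr → ℝ) (μ : Measure Cantor) [IsProbabilityMeasure μ] (n : ℕ) :
    Integrable (fun Z => f (seg Z n)) μ := by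
  have h : Integrable (fun v : Fin n → Bool => f (List.ofFn v))
      (μ.map (fun (Z : Cantor) (i : Fin n) => Z i.1)) := Integrable.of_finite
  exact h.comp_measurable (measurable_restr n)

theorem avg_eq (U : BStr →. BStr) (μ : Measure Cantor) [IsProbabilityMeasure μ] (n : ℕ) :
    avgCpx U μ n = ∫ Z, (cpx U (seg Z n) : ℝ) ∂μ := by
  have h : ∫ Z, (cpx U (seg Z n) : ℝ) ∂μ = ∫ v, (cpx U (List.ofFn v) : ℝ)
      ∂(μ.map (fun (Z : Cantor) (i : Fin n) => Z i.1)) := by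
    rw [integral_map (measurable_restr n).aemeasurable]
    · rfl
    · exact (measurable_of_finite _).aestronglyMeasurable
  rw [h, integral_fintype Integrable.of_finite]
  unfold avgCpx
  apply Finset.sum_congr rfl
  intro v _
  rw [smul_eq_mul, mul_comm, Measure.real, Measure.map_apply (measurable_restr n) (by simp)]
  congr 3
  ext Z
  simp only [cyl, Set.mem_ofPred_eq, Set.mem_preimage, Set.mem_singleton_iff, funext_iff]
  constructor
  · intro h i
    have := h ⟨i.1, by simp⟩
    simpa using this
  · intro h i
    have := h ⟨i.1, by simpa using i.2⟩
    simpa using this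

theorem measurable_join : Measurable _root_.join := by
  refine measurable_pi_lambda _ fun n => ?_
  unfold _root_.join
  by_cases h : n % 2 = 0
  · simp only [h, if_true]
    exact (measurable_pi_apply _).comp measurable_fst
  · simp only [h, if_false]
    exact (measurable_pi_apply _).comp measurable_snd

theorem seg_join (A B : Cantor) (N : ℕ) :
    seg (join (A, B)) N = jn N (seg A ((N + 1) / 2)) (seg B (N / 2)) := by
  apply List.ext_getElem
  · simp [seg, jn]
  · intro i h1 h2
    have hi : i < N := by simpa [seg] using h1
    simp only [seg, jn, _root_.join, List.getElem_ofFn, List.getElem_map, List.getElem_range]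
    split
    · rw [List.getD_eq_getElem _ _ (by simp; omega)]
      simp
    · rw [List.getD_eq_getElem _ _ (by simp; omega)]
      simp

/-- if `μ` and `ν` are C-trivial measures, then the pushforward
of `μ × ν` under the join map is C-trivial. -/
theorem product_of_CTrivial_is_CTrivial
    (U : BStr →. BStr) (hU : UniversalPlain U)
    (hlen : ∀ x : BStr, cpxN U x.length ≤ cpx U x)
    (μ ν : Measure Cantor) [IsProbabilityMeasure μ] [IsProbabilityMeasure ν]
    (hμ : MeasTrivial U μ) (hν : MeasTrivial U ν) :
    MeasTrivial U (Measure.map join (μ.prod ν)) := by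
  obtain ⟨c, hc⟩ := pointwise U hU
  obtain ⟨cμ, hcμ⟩ := hμ
  obtain ⟨cν, hcν⟩ := hν
  refine ⟨7 * (cμ + cν) + c, fun N => ?_⟩
  have : IsProbabilityMeasure (Measure.map _root_.join (μ.prod ν)) :=
    Measure.isProbabilityMeasure_map measurable_join.aemeasurable
  have h1 := hcμ ((N + 1) / 2)
  have h2 := hcν (N / 2)
  rw [avg_eq] at h1 h2 ⊢
  have hI := integrable_seg (fun x => (cpx U x : ℝ)) (Measure.map _root_.join (μ.prod ν)) N
  rw [integral_map measurable_join.aemeasurable hI.aestronglyMeasurable]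
  have hIj : Integrable (fun p : Cantor × Cantor => (cpx U (seg (join p) N) : ℝ)) (μ.prod ν) :=
    hI.comp_measurable measurable_join
  have hA := integrable_seg (fun x => (cpx U x : ℝ)) μ ((N + 1) / 2)
  have hB := integrable_seg (fun x => (cpx U x : ℝ)) ν (N / 2)
  have hA' : Integrable (fun p : Cantor × Cantor => (cpx U (seg p.1 ((N + 1) / 2)) : ℝ))
      (μ.prod ν) := hA.comp_fst ν
  have hB' : Integrable (fun p : Cantor × Cantor => (cpx U (seg p.2 (N / 2)) : ℝ))
      (μ.prod ν) := hB.comp_snd μ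
  have hAB : Integrable (fun p : Cantor × Cantor =>
      7 * ((cpx U (seg p.1 ((N + 1) / 2)) : ℝ) + (cpx U (seg p.2 (N / 2)) : ℝ)))
      (μ.prod ν) := (hA'.add hB').const_mul 7
  have hle : ∀ p : Cantor × Cantor, (cpx U (seg (join p) N) : ℝ) ≤
      7 * ((cpx U (seg p.1 ((N + 1) / 2)) : ℝ) + (cpx U (seg p.2 (N / 2)) : ℝ)) +
      ((cpxN U N : ℝ) + c - 7 * ((cpxN U ((N + 1) / 2) : ℝ) + (cpxN U (N / 2) : ℝ))) := by
    rintro ⟨A, B⟩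
    have hx : (seg A ((N + 1) / 2)).length = (N + 1) / 2 := by simp [seg]
    have hy : (seg B (N / 2)).length = N / 2 := by simp [seg]
    have h := hc N _ _ hx hy
    rw [← seg_join] at h
    have lx := hlen (seg A ((N + 1) / 2))
    have ly := hlen (seg B (N / 2))
    rw [hx] at lx
    rw [hy] at ly
    have h' := (Nat.cast_le (α := ℝ)).2 h
    push_cast [Nat.cast_sub lx, Nat.cast_sub ly] at h'
    simp only
    linarith
  have hint := integral_mono hIj (hAB.add (integrable_const _)) hle
  refine hint.trans ?_
  simp only [Pi.add_apply]
  rw [integral_add hAB (integrable_const _), integral_const_mul,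
    integral_add hA' hB', integral_fun_fst (fun A => (cpx U (seg A ((N + 1) / 2)) : ℝ)),
    integral_fun_snd (fun B => (cpx U (seg B (N / 2)) : ℝ))]
  simp
  linarith
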